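/- Let Π be a DatalogMTL program in normal form, D a dataset, q a query, and (Π′,D′) = MagicRewriting(Π,D,q). For every fact g = S(c)@t with t a time point and S an idb predicate of Π, and every i ≥ 1: if birth(g,Π′,D′) = i, then the i-th iterate ℑ_i of (Π,D) satisfies g. Consequently, every fact with punctual interval and idb-in-Π predicate that has a birth round regarding (Π′,D′) is entailed by (Π,D). -/

import Mathlib

/-!
Soundness of the magic-set rewriting. By induction on `i`, every base atom of the `i`-th iterate of
the rewritten pair already belongs to the `i`-th iterate of `(P, D)` (`iterates_baseLE`).

At a successor stage, let `K` be the interpretation containing all atoms whose predicate is not a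
base predicate, together with the base atoms of the next iterate of `(P, D)`. Then `K` is one of
the interpretations whose intersection is the next iterate of the rewritten pair. Indeed, deleting
the adornments of a rule of the first type gives back a rule of `P` with one additional (magic)
body atom, and satisfaction of atoms over base predicates is monotone (`satAt_mono`), so its head is
already derived by `P`. A rule of the second type has a head that mentions only magic predicates
and legal head operators (`magicHeadAtoms_spec`), so its head holds in `K` trivially.

Entailment follows because every model of `(P, D)` contains all iterates of `(P, D)`
(`iterates_sub_model`).
-/

/-! # DatalogMTL: syntax, semantics, and the magic-set rewriting -/

/-- Terms: variables and constants (names are strings). -/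
inductive Term where
  | var (v : String)
  | const (c : String)
deriving DecidableEq

/-- An adornment is a list of booleans (`true` = bound `b`, `false` = free `f`). -/
abbrev Adornment := List Bool

/-- Predicates: the base predicates of the input, adorned predicates `R^γ`
(used during the rewriting), and the fresh magic predicates `m_R^γ`. -/
inductive PredSym where
  | base (name : String)
  | adorned (name : String) (γ : Adornment)
  | magic (name : String) (γ : Adornment)
deriving DecidableEq

/-- An interval of rationals, given by optional endpoints (`none` = infinite)
and openness flags. -/
structure Ivl where
  lo : Option ℚ
  hi : Option ℚ
  loOpen : Bool
  hiOpen : Bool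
deriving DecidableEq

namespace Ivl

/-- membership of a time point in an interval -/
def mem (t : ℚ) (ρ : Ivl) : Prop :=
  (match ρ.lo with
   | none => True
   | some a => if ρ.loOpen then a < t else a ≤ t) ∧
  (match ρ.hi with
   | none => True
   | some b => if ρ.hiOpen then t < b else t ≤ b)

/-- the punctual interval `[t,t]` -/
def punctual (t : ℚ) : Ivl := ⟨some t, some t, false, false⟩

/-- the interval `(-∞, +∞)` -/
def all : Ivl := ⟨none, none, true, true⟩

/-- nonemptiness of an interval -/
def NE (ρ : Ivl) : Prop := ∃ t, ρ.mem t

/-- an interval containing only non-negative rationals -/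
def Nonneg (ρ : Ivl) : Prop := ∀ t, ρ.mem t → 0 ≤ t

/-- a bounded interval (both endpoints rational) -/
def Bounded (ρ : Ivl) : Prop := ρ.lo.isSome ∧ ρ.hi.isSome

end Ivl

/-- Metric atoms. -/
inductive MAtom where
  | top
  | bot
  | rel (p : PredSym) (ts : List Term)
  | boxPlus (ρ : Ivl) (M : MAtom)
  | boxMinus (ρ : Ivl) (M : MAtom)
  | diaPlus (ρ : Ivl) (M : MAtom)
  | diaMinus (ρ : Ivl) (M : MAtom)
  | until_ (ρ : Ivl) (M₂ M₁ : MAtom)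
  | since_ (ρ : Ivl) (M₂ M₁ : MAtom)
deriving DecidableEq

namespace Term

def vars : Term → List String
  | .var v => [v]
  | .const _ => []

end Term

namespace MAtom

/-- variables occurring in a metric atom -/
def vars : MAtom → List String
  | .top | .bot => []
  | .rel _ ts => ts.flatMap Term.vars
  | .boxPlus _ M | .boxMinus _ M | .diaPlus _ M | .diaMinus _ M => M.vars
  | .until_ _ M₂ M₁ | .since_ _ M₂ M₁ => M₂.vars ++ M₁.vars

/-- predicates occurring in a metric atom -/
def preds : MAtom → List PredSym
  | .top | .bot => []
  | .rel p _ => [p]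
  | .boxPlus _ M | .boxMinus _ M | .diaPlus _ M | .diaMinus _ M => M.preds
  | .until_ _ M₂ M₁ | .since_ _ M₂ M₁ => M₂.preds ++ M₁.preds

/-- intervals mentioned by the MTL operators of a metric atom -/
def ivls : MAtom → List Ivl
  | .top | .bot | .rel _ _ => []
  | .boxPlus ρ M | .boxMinus ρ M | .diaPlus ρ M | .diaMinus ρ M => ρ :: M.ivls
  | .until_ ρ M₂ M₁ | .since_ ρ M₂ M₁ => ρ :: (M₂.ivls ++ M₁.ivls)

/-- a metric atom legal as a rule head: mentions no `⊥`, `◇⁺`, `◇⁻`, `U`, `S` -/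
def headOK : MAtom → Prop
  | .top => True
  | .bot => False
  | .rel _ _ => True
  | .boxPlus _ M => M.headOK
  | .boxMinus _ M => M.headOK
  | .diaPlus _ _ | .diaMinus _ _ | .until_ _ _ _ | .since_ _ _ _ => False

/-- well-formedness: all operator intervals are nonempty and contain only
non-negative rationals -/
def WF : MAtom → Prop
  | .top | .bot | .rel _ _ => True
  | .boxPlus ρ M | .boxMinus ρ M | .diaPlus ρ M | .diaMinus ρ M =>
      ρ.NE ∧ ρ.Nonneg ∧ M.WF
  | .until_ ρ M₂ M₁ | .since_ ρ M₂ M₁ => ρ.NE ∧ ρ.Nonneg ∧ M₂.WF ∧ M₁.WF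

/-- applying a substitution (mapping variables to constants) to a metric atom -/
def subst (σ : String → String) : MAtom → MAtom
  | .top => .top
  | .bot => .bot
  | .rel p ts =>
      .rel p (ts.map fun tm => match tm with
        | .var v => .const (σ v)
        | .const c => .const c)
  | .boxPlus ρ M => .boxPlus ρ (M.subst σ)
  | .boxMinus ρ M => .boxMinus ρ (M.subst σ)
  | .diaPlus ρ M => .diaPlus ρ (M.subst σ)
  | .diaMinus ρ M => .diaMinus ρ (M.subst σ)
  | .until_ ρ M₂ M₁ => .until_ ρ (M₂.subst σ) (M₁.subst σ)
  | .since_ ρ M₂ M₁ => .since_ ρ (M₂.subst σ) (M₁.subst σ)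

/-- an atom without MTL operators -/
def isBasic : MAtom → Prop
  | .top | .bot | .rel _ _ => True
  | _ => False

/-- no nested MTL operators -/
def nonNested : MAtom → Prop
  | .top | .bot | .rel _ _ => True
  | .boxPlus _ M | .boxMinus _ M | .diaPlus _ M | .diaMinus _ M => M.isBasic
  | .until_ _ M₂ M₁ | .since_ _ M₂ M₁ => M₂.isBasic ∧ M₁.isBasic

/-- a normal-form head: `⊞_ϱ R(s)` or `⊟_ϱ R(s)` -/
def headNF : MAtom → Prop
  | .boxPlus _ (.rel _ _) => True
  | .boxMinus _ (.rel _ _) => True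
  | _ => False

/-- whether a magic predicate occurs in the atom -/
def containsMagic (M : MAtom) : Prop :=
  ∃ p ∈ M.preds, ∃ n γ, p = PredSym.magic n γ

end MAtom

/-- A rule `head ← body`. -/
structure Rule where
  head : MAtom
  body : List MAtom
deriving DecidableEq

/-- A program is a set of rules (finiteness is part of `ProgramWF`). -/
abbrev Program := Set Rule

/-- A substitution maps variable names to constant names. -/
abbrev Subst := String → String

/-- A fact `R(c)@ϱ`. -/
structure TFact where
  pred : PredSym
  args : List String
  ivl : Ivl
deriving DecidableEq

/-- A dataset is a set of facts (finiteness is part of `DatasetWF`). -/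
abbrev Dataset := Set TFact

/-- An interpretation maps each rational time point to a set of ground
relational atoms (predicate together with a tuple of constants). -/
abbrev Interp := ℚ → Set (PredSym × List String)

/-- Satisfaction of a (ground) metric atom at a time point. -/
def satAt (ℑ : Interp) : ℚ → MAtom → Prop
  | _, .top => True
  | _, .bot => False
  | t, .rel p ts => ∃ cs : List String, ts = cs.map Term.const ∧ (p, cs) ∈ ℑ t
  | t, .boxPlus ρ M => ∀ t₁ : ℚ, Ivl.mem (t₁ - t) ρ → satAt ℑ t₁ M
  | t, .boxMinus ρ M => ∀ t₁ : ℚ, Ivl.mem (t - t₁) ρ → satAt ℑ t₁ M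
  | t, .diaPlus ρ M => ∃ t₁ : ℚ, Ivl.mem (t₁ - t) ρ ∧ satAt ℑ t₁ M
  | t, .diaMinus ρ M => ∃ t₁ : ℚ, Ivl.mem (t - t₁) ρ ∧ satAt ℑ t₁ M
  | t, .until_ ρ M₂ M₁ =>
      ∃ t₁ : ℚ, Ivl.mem (t₁ - t) ρ ∧ satAt ℑ t₁ M₁ ∧
        ∀ t₂ : ℚ, t < t₂ → t₂ < t₁ → satAt ℑ t₂ M₂
  | t, .since_ ρ M₂ M₁ =>
      ∃ t₁ : ℚ, Ivl.mem (t - t₁) ρ ∧ satAt ℑ t₁ M₁ ∧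
        ∀ t₂ : ℚ, t₁ < t₂ → t₂ < t → satAt ℑ t₂ M₂

/-- Satisfaction of a fact. -/
def satFact (ℑ : Interp) (g : TFact) : Prop :=
  ∀ t : ℚ, Ivl.mem t g.ivl → (g.pred, g.args) ∈ ℑ t

/-- An interpretation satisfies a rule if it satisfies all its ground instances. -/
def modelsRule (ℑ : Interp) (r : Rule) : Prop :=
  ∀ σ : Subst, ∀ t : ℚ,
    (∀ M ∈ r.body, satAt ℑ t (M.subst σ)) → satAt ℑ t (r.head.subst σ)

/-- model of a program -/
def modelsProg (ℑ : Interp) (P : Program) : Prop := ∀ r ∈ P, modelsRule ℑ r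

/-- model of a dataset -/
def modelsData (ℑ : Interp) (D : Dataset) : Prop := ∀ g ∈ D, satFact ℑ g

/-- Entailment `(P, D) ⊨ g`. -/
def entails (P : Program) (D : Dataset) (g : TFact) : Prop :=
  ∀ ℑ : Interp, modelsProg ℑ P → modelsData ℑ D → satFact ℑ g

/-- The least model `ℑ_D` of a dataset. -/
def leastModel (D : Dataset) : Interp :=
  fun t => {a | ∃ g ∈ D, g.pred = a.1 ∧ g.args = a.2 ∧ Ivl.mem t g.ivl}

/-- The immediate consequence operator `T_P`: the least interpretation
containing `ℑ` such that whenever the body of a ground instance of a rule of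
`P` holds in `ℑ` at `t`, its head holds in the result at `t`. -/
def TP (P : Program) (ℑ : Interp) : Interp :=
  fun t =>
    ⋂ J ∈ {J : Interp |
      (∀ u : ℚ, ℑ u ⊆ J u) ∧
      ∀ r ∈ P, ∀ σ : Subst, ∀ u : ℚ,
        (∀ M ∈ r.body, satAt ℑ u (M.subst σ)) → satAt J u (r.head.subst σ)},
    J t

/-- The (finite) iterates `ℑ₀ = ℑ_D`, `ℑ_{i+1} = T_P(ℑ_i)` of a pair `(P,D)`. -/
def iterates (P : Program) (D : Dataset) : ℕ → Interp
  | 0 => leastModel D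
  | n + 1 => TP P (iterates P D n)

/-- `g` has birth round `i` regarding `(P,D)`. -/
def birthEq (g : TFact) (P : Program) (D : Dataset) (i : ℕ) : Prop :=
  satFact (iterates P D i) g ∧ (i = 0 ∨ ¬ satFact (iterates P D (i - 1)) g)

/-- `g` has a (finite) birth round regarding `(P,D)`. -/
def hasBirth (g : TFact) (P : Program) (D : Dataset) : Prop :=
  ∃ i : ℕ, birthEq g P D i

/-- The canonical interpretation `C_{P,D}` (the least model of `(P,D)`). -/
def canonInterp (P : Program) (D : Dataset) : Interp :=
  fun t => ⋂ J ∈ {J : Interp | modelsProg J P ∧ modelsData J D}, J t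

/-- well-formed rule: nonempty body, legal well-formed head and body, safe -/
def RuleWF (r : Rule) : Prop :=
  r.body ≠ [] ∧ r.head.headOK ∧ r.head.WF ∧ (∀ M ∈ r.body, M.WF) ∧
  (∀ v ∈ r.head.vars, ∃ M ∈ r.body, v ∈ M.vars)

/-- all predicates of the rule are base predicates (magic and adorned
predicates are fresh) -/
def Rule.predsBase (r : Rule) : Prop :=
  ∀ p ∈ r.head.preds ++ r.body.flatMap MAtom.preds, ∃ n, p = PredSym.base n

/-- well-formed program: finite set of well-formed safe rules over base predicates -/
def ProgramWF (P : Program) : Prop :=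
  P.Finite ∧ ∀ r ∈ P, RuleWF r ∧ r.predsBase

/-- well-formed dataset: finite set of facts with nonempty intervals, over base
predicates -/
def DatasetWF (D : Dataset) : Prop :=
  D.Finite ∧ ∀ g ∈ D, g.ivl.NE ∧ ∃ n, g.pred = PredSym.base n

/-- normal form: no nested operators and every head of the form `⊞_ϱ R(s)`
or `⊟_ϱ R(s)` -/
def NormalForm (P : Program) : Prop :=
  ∀ r ∈ P, r.head.headNF ∧ ∀ M ∈ r.body, M.nonNested

/-- bounded program -/
def ProgramBounded (P : Program) : Prop :=
  ∀ r ∈ P, ∀ ρ ∈ r.head.ivls ++ r.body.flatMap MAtom.ivls, ρ.Bounded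

/-- bounded dataset -/
def DatasetBounded (D : Dataset) : Prop := ∀ g ∈ D, g.ivl.Bounded

/-! ## The magic-set rewriting -/

/-- `bt(s,γ)`: the subsequence of terms of `s` bound according to `γ` -/
def bt (ts : List Term) (γ : Adornment) : List Term :=
  ((ts.zip γ).filter fun p => p.2).map Prod.fst

/-- `bv(s,γ)`: the subsequence of variables of `s` bound according to `γ` -/
def bv (ts : List Term) (γ : Adornment) : List Term :=
  (bt ts γ).filter fun tm => match tm with | .var _ => true | .const _ => false

/-- `bt` on a ground tuple of constants -/
def btC (cs : List String) (γ : Adornment) : List String :=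
  ((cs.zip γ).filter fun p => p.2).map Prod.fst

/-- the adornment of the query: `b` exactly at the positions holding constants -/
def adornOfTerms (ts : List Term) : Adornment :=
  ts.map fun tm => match tm with | .const _ => true | .var _ => false

/-- adornment of a tuple given the list `B` of bound variables: constants and
variables from `B` are bound -/
def adornTerms (B : List String) (ts : List Term) : Adornment :=
  ts.map fun tm => match tm with | .const _ => true | .var v => B.contains v

/-- the head predicate name of a (normal-form) rule -/
def headName (r : Rule) : Option String :=
  match r.head with
  | .boxPlus _ (.rel (.base n) _) => some n
  | .boxMinus _ (.rel (.base n) _) => some n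
  | .rel (.base n) _ => some n
  | _ => none

/-- the argument tuple of the head of a (normal-form) rule -/
def headArgs (r : Rule) : List Term :=
  match r.head with
  | .boxPlus _ (.rel _ ts) => ts
  | .boxMinus _ (.rel _ ts) => ts
  | .rel _ ts => ts
  | _ => []

/-- `n` is an idb predicate in `P`: it occurs in the head of some rule -/
def isIdbName (P : Program) (n : String) : Prop :=
  ∃ r ∈ P, headName r = some n

/-- adorn a base predicate occurring with argument tuple `ts`, given
bound variables `B` -/
def adornPredOf (B : List String) (p : PredSym) (ts : List Term) : PredSym :=
  match p with
  | .base n => .adorned n (adornTerms B ts)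
  | _ => p

/-- adorn all relational atoms of a metric atom, given bound variables `B` -/
def MAtom.adornWith (B : List String) : MAtom → MAtom
  | .top => .top
  | .bot => .bot
  | .rel p ts => .rel (adornPredOf B p ts) ts
  | .boxPlus ρ M => .boxPlus ρ (M.adornWith B)
  | .boxMinus ρ M => .boxMinus ρ (M.adornWith B)
  | .diaPlus ρ M => .diaPlus ρ (M.adornWith B)
  | .diaMinus ρ M => .diaMinus ρ (M.adornWith B)
  | .until_ ρ M₂ M₁ => .until_ ρ (M₂.adornWith B) (M₁.adornWith B)
  | .since_ ρ M₂ M₁ => .since_ ρ (M₂.adornWith B) (M₁.adornWith B)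

/-- adorn the head of a (normal-form) rule with `γ` -/
def adornHead (γ : Adornment) : MAtom → MAtom
  | .boxPlus ρ (.rel (.base n) ts) => .boxPlus ρ (.rel (.adorned n γ) ts)
  | .boxMinus ρ (.rel (.base n) ts) => .boxMinus ρ (.rel (.adorned n γ) ts)
  | M => M

/-- variables of the head bound according to `γ` -/
def headBoundVars (r : Rule) (γ : Adornment) : List String :=
  (bv (headArgs r) γ).flatMap Term.vars

/-- the adorned version of rule `r` for head adornment `γ`: an occurrence of
a variable in the `i`-th body atom is bound iff the variable is bound in the
head or occurs in a body atom strictly to the left -/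
def adornRule (r : Rule) (γ : Adornment) : Rule :=
  ⟨adornHead γ r.head,
   r.body.mapIdx fun i M =>
     M.adornWith (headBoundVars r γ ++ (r.body.take i).flatMap MAtom.vars)⟩

/-- the adorned idb predicates reachable by the adornment procedure started
from `Q^{γ₀}` -/
inductive Reach (P : Program) (Q : String) (γ₀ : Adornment) :
    String → Adornment → Prop where
  | init : Reach P Q γ₀ Q γ₀
  | step {R : String} {γ : Adornment} {S : String} {γ' : Adornment} (r : Rule) :
      Reach P Q γ₀ R γ → r ∈ P → headName r = some R →
      (∃ M ∈ (adornRule r γ).body, PredSym.adorned S γ' ∈ M.preds) →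
      isIdbName P S →
      Reach P Q γ₀ S γ'

/-- the adorned program `P_a` -/
def adornedProg (P : Program) (Q : String) (γ₀ : Adornment) : Set Rule :=
  {ra | ∃ r ∈ P, ∃ R γ, Reach P Q γ₀ R γ ∧ headName r = some R ∧
    ra = adornRule r γ}

/-- the magic body atom added for an adorned head -/
def magicBodyAtom : MAtom → Option MAtom
  | .boxPlus ρ (.rel (.adorned R γ) s) =>
      some (.diaPlus ρ (.rel (.magic R γ) (bv s γ)))
  | .boxMinus ρ (.rel (.adorned R γ) s) =>
      some (.diaMinus ρ (.rel (.magic R γ) (bv s γ)))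
  | _ => none

/-- the rules `P1x` of the first type -/
def magicProg1 (Pa : Set Rule) : Set Rule :=
  {r' | ∃ r ∈ Pa, ∃ m, magicBodyAtom r.head = some m ∧
    r' = ⟨r.head, m :: r.body⟩}

open Classical in
/-- replacing every adorned idb relational atom `R^γ(s)` by `m_R^γ(bv(s,γ))` -/
noncomputable def magicize (P : Program) : MAtom → MAtom
  | .top => .top
  | .bot => .bot
  | .rel p ts =>
      match p with
      | .adorned n γ =>
          if isIdbName P n then .rel (.magic n γ) (bv ts γ) else .rel (.adorned n γ) ts
      | _ => .rel p ts
  | .boxPlus ρ M => .boxPlus ρ (magicize P M)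
  | .boxMinus ρ M => .boxMinus ρ (magicize P M)
  | .diaPlus ρ M => .diaPlus ρ (magicize P M)
  | .diaMinus ρ M => .diaMinus ρ (magicize P M)
  | .until_ ρ M₂ M₁ => .until_ ρ (magicize P M₂) (magicize P M₁)
  | .since_ ρ M₂ M₁ => .since_ ρ (magicize P M₂) (magicize P M₁)

/-- `MagicHeadAtoms` -/
noncomputable def magicHeadAtoms (P : Program) (M : MAtom) : Set MAtom :=
  match magicize P M with
  | .boxPlus ρ M₁ => {MAtom.boxPlus ρ M₁}
  | .boxMinus ρ M₁ => {MAtom.boxMinus ρ M₁}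
  | .diaPlus ρ M₁ => {MAtom.boxPlus ρ M₁}
  | .diaMinus ρ M₁ => {MAtom.boxMinus ρ M₁}
  | .since_ ρ M₂ M₁ =>
      {A | (M₂.containsMagic ∧ A = MAtom.boxMinus ⟨some 0, ρ.hi, false, false⟩ M₂) ∨
           (M₁.containsMagic ∧ A = MAtom.boxMinus ρ M₁)}
  | .until_ ρ M₂ M₁ =>
      {A | (M₂.containsMagic ∧ A = MAtom.boxPlus ⟨some 0, ρ.hi, false, false⟩ M₂) ∨
           (M₁.containsMagic ∧ A = MAtom.boxPlus ρ M₁)}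
  | M' => {M'}

/-- a (adorned) body atom whose predicate is idb in `P` -/
def atomIdb (P : Program) (M : MAtom) : Prop :=
  ∃ n γ, PredSym.adorned n γ ∈ M.preds ∧ isIdbName P n

/-- the rules `P2x` of the second type -/
noncomputable def magicProg2 (P : Program) (P1 : Set Rule) : Set Rule :=
  {r' | ∃ r ∈ P1, ∃ i : ℕ, ∃ M, r.body[i]? = some M ∧ atomIdb P M ∧
    ∃ M' ∈ magicHeadAtoms P M, r' = ⟨M', r.body.take i⟩}

/-- deleting adornments from non-magic predicates -/
def PredSym.unadorn : PredSym → PredSym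
  | .adorned n _ => .base n
  | p => p

def MAtom.unadorn : MAtom → MAtom
  | .top => .top
  | .bot => .bot
  | .rel p ts => .rel p.unadorn ts
  | .boxPlus ρ M => .boxPlus ρ M.unadorn
  | .boxMinus ρ M => .boxMinus ρ M.unadorn
  | .diaPlus ρ M => .diaPlus ρ M.unadorn
  | .diaMinus ρ M => .diaMinus ρ M.unadorn
  | .until_ ρ M₂ M₁ => .until_ ρ M₂.unadorn M₁.unadorn
  | .since_ ρ M₂ M₁ => .since_ ρ M₂.unadorn M₁.unadorn

def Rule.unadorn (r : Rule) : Rule :=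
  ⟨r.head.unadorn, r.body.map MAtom.unadorn⟩

/-- the program `Pm` produced by `MagicRewriting(P, D, Q(s)@ϱ)`
(it does not depend on `D` nor on `ϱ`) -/
noncomputable def magicProgram (P : Program) (Q : String) (s : List Term) :
    Set Rule :=
  Rule.unadorn ''
    (magicProg1 (adornedProg P Q (adornOfTerms s)) ∪
     magicProg2 P (magicProg1 (adornedProg P Q (adornOfTerms s))))

def termToConst : Term → String
  | .const c => c
  | .var v => v

/-- the magic fact `m_Q^{γ₀}(bt(s,γ₀))@ϱ` added to the dataset -/
def magicFact (Q : String) (s : List Term) (ρ : Ivl) : TFact :=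
  ⟨.magic Q (adornOfTerms s), (bt s (adornOfTerms s)).map termToConst, ρ⟩

/-- the dataset `D′` produced by `MagicRewriting(P, D, Q(s)@ϱ)` -/
def magicDataset (D : Dataset) (Q : String) (s : List Term) (ρ : Ivl) :
    Dataset :=
  D ∪ {magicFact Q s ρ}

/-- `σ(s)` as a ground tuple of constants -/
def groundTuple (σ : Subst) (s : List Term) : List String :=
  s.map fun tm => match tm with | .var v => σ v | .const c => c

/-- `toRule(R(c)@(−∞,+∞))` is the rule `R(c) ← ⊤` -/
def TFact.toRule (g : TFact) : Rule :=
  ⟨.rel g.pred (g.args.map Term.const), [.top]⟩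

/-- `swap(E)` -/
def swapE (E : Set TFact) : Set Rule := TFact.toRule '' E

/-- the rule `m_Q^{γ₀}(bt(s,γ₀)) ← ⊤` -/
def topRule (Q : String) (s : List Term) : Rule :=
  ⟨.rel (.magic Q (adornOfTerms s)) (bt s (adornOfTerms s)), [.top]⟩

/-- a predicate occurs in a program -/
def predOccursInProg (P : Set Rule) (p : PredSym) : Prop :=
  ∃ r ∈ P, p ∈ r.head.preds ∨ ∃ M ∈ r.body, p ∈ M.preds

/-- a predicate occurs in a dataset -/
def predOccursInData (D : Set TFact) (p : PredSym) : Prop :=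
  ∃ g ∈ D, g.pred = p

/-- a magic predicate -/
def PredSym.IsMagic : PredSym → Prop
  | .magic _ _ => True
  | _ => False

/-! ### Inclusion of base atoms -/

/-- Every atom over a base predicate that holds in `I` also holds in `J`. -/
def BaseLE (I J : Interp) : Prop :=
  ∀ t n cs, (PredSym.base n, cs) ∈ I t → (PredSym.base n, cs) ∈ J t

theorem satAt_mono {I J : Interp} (h : BaseLE I J) (σ : Subst) (M : MAtom)
    (hM : ∀ p ∈ M.preds, ∃ n, p = PredSym.base n) (t : ℚ)
    (hs : satAt I t (M.subst σ)) : satAt J t (M.subst σ) := by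
  induction M generalizing t with
  | top => trivial
  | bot => exact hs
  | rel p ts =>
    obtain ⟨n, rfl⟩ := hM p (by simp [MAtom.preds])
    obtain ⟨cs, h1, h2⟩ := hs
    exact ⟨cs, h1, h _ _ _ h2⟩
  | boxPlus ρ M ih => exact fun u hu => ih hM u (hs u hu)
  | boxMinus ρ M ih => exact fun u hu => ih hM u (hs u hu)
  | diaPlus ρ M ih =>
    obtain ⟨u, hu, h1⟩ := hs
    exact ⟨u, hu, ih hM u h1⟩
  | diaMinus ρ M ih =>
    obtain ⟨u, hu, h1⟩ := hs
    exact ⟨u, hu, ih hM u h1⟩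
  | until_ ρ M₂ M₁ ih2 ih1 =>
    obtain ⟨u, hu, h1, h2⟩ := hs
    exact ⟨u, hu, ih1 (fun p hp => hM p (List.mem_append_right _ hp)) u h1,
      fun v hv hv' => ih2 (fun p hp => hM p (List.mem_append_left _ hp)) v (h2 v hv hv')⟩
  | since_ ρ M₂ M₁ ih2 ih1 =>
    obtain ⟨u, hu, h1, h2⟩ := hs
    exact ⟨u, hu, ih1 (fun p hp => hM p (List.mem_append_right _ hp)) u h1,
      fun v hv hv' => ih2 (fun p hp => hM p (List.mem_append_left _ hp)) v (h2 v hv hv')⟩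

theorem satAt_rel_subst (I : Interp) (t : ℚ) (σ : Subst) (p : PredSym) (ts : List Term) :
    satAt I t ((MAtom.rel p ts).subst σ) ↔ (p, groundTuple σ ts) ∈ I t := by
  have key : (ts.map fun tm => match tm with
        | .var v => Term.const (σ v)
        | .const c => Term.const c) = (groundTuple σ ts).map Term.const := by
    simp only [groundTuple, List.map_map]
    apply List.map_congr_left
    rintro (v | c) _ <;> rfl
  have hinj : Function.Injective (List.map Term.const) :=
    List.map_injective_iff.mpr fun a b h => by injection h
  simp only [MAtom.subst, satAt, key]
  constructor
  · rintro ⟨cs, h1, h2⟩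
    rwa [hinj h1]
  · exact fun h => ⟨_, rfl, h⟩

/-! ### The immediate consequence operator -/

theorem sub_TP (P : Program) (I : Interp) (t : ℚ) : I t ⊆ TP P I t :=
  fun _ ha => Set.mem_iInter₂.mpr fun _ hJ => hJ.1 t ha

/-- The result of `TP` satisfies the derived heads; this uses that legal heads are preserved under
intersections of interpretations. -/
theorem TP_head (P : Program) (I : Interp) (r : Rule) (hr : r ∈ P) (hh : r.head.headOK)
    (σ : Subst) (t : ℚ) (hb : ∀ M ∈ r.body, satAt I t (M.subst σ)) :
    satAt (TP P I) t (r.head.subst σ) := by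
  have aux : ∀ (𝒥 : Set Interp) (M : MAtom), M.headOK → ∀ u,
      (∀ J ∈ 𝒥, satAt J u (M.subst σ)) →
        satAt (fun v => ⋂ J ∈ 𝒥, J v) u (M.subst σ) := by
    intro 𝒥 M hM
    induction M with
    | top => intros; trivial
    | rel p ts =>
      intro u h
      rw [satAt_rel_subst]
      exact Set.mem_iInter₂.mpr fun J hJ => (satAt_rel_subst _ _ _ _ _).mp (h J hJ)
    | boxPlus ρ M ih => exact fun u h v hv => ih hM v fun J hJ => h J hJ v hv
    | boxMinus ρ M ih => exact fun u h v hv => ih hM v fun J hJ => h J hJ v hv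
    | _ => exact hM.elim
  exact aux _ _ hh t fun J hJ => hJ.2 r hr σ t hb

theorem TP_sub (P : Program) (I J : Interp) (h1 : ∀ u, I u ⊆ J u)
    (h2 : ∀ r ∈ P, ∀ σ : Subst, ∀ u : ℚ,
      (∀ M ∈ r.body, satAt I u (M.subst σ)) → satAt J u (r.head.subst σ)) (t : ℚ) :
    TP P I t ⊆ J t :=
  fun _ ha => Set.mem_iInter₂.mp ha J ⟨h1, h2⟩

/-! ### Heads of magic rules -/

/-- A legal head all of whose predicates are magic. -/
def MagicOnly (M : MAtom) : Prop := M.headOK ∧ ∀ p ∈ M.preds, p.IsMagic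

theorem MagicOnly.satAt {K : Interp} (hK : ∀ t n γ cs, (PredSym.magic n γ, cs) ∈ K t)
    (σ : Subst) (M : MAtom) (hM : MagicOnly M) (t : ℚ) :
    satAt K t (M.unadorn.subst σ) := by
  induction M generalizing t with
  | top => trivial
  | rel p ts =>
    have hp := hM.2 p (by simp [MAtom.preds])
    cases p with
    | magic n γ =>
      simp only [MAtom.unadorn, satAt_rel_subst]
      exact hK _ _ _ _
    | _ => exact hp.elim
  | boxPlus ρ M ih => exact fun u _ => ih hM u
  | boxMinus ρ M ih => exact fun u _ => ih hM u
  | _ => exact hM.1.elim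

theorem magicize_basic_of_containsMagic (P : Program) (B : List String) (N : MAtom)
    (hN : N.isBasic) (hb : ∀ p ∈ N.preds, ∃ n, p = PredSym.base n)
    (hc : (magicize P (N.adornWith B)).containsMagic) :
    MagicOnly (magicize P (N.adornWith B)) := by
  cases N with
  | rel p ts =>
    obtain ⟨n, rfl⟩ := hb p (by simp [MAtom.preds])
    by_cases h : isIdbName P n
    · simp [MagicOnly, MAtom.adornWith, adornPredOf, magicize, h, MAtom.headOK, MAtom.preds,
        PredSym.IsMagic]
    · simp [MAtom.adornWith, adornPredOf, magicize, h, MAtom.containsMagic, MAtom.preds] at hc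
  | top => simp [MAtom.adornWith, magicize, MAtom.containsMagic, MAtom.preds] at hc
  | bot => simp [MAtom.adornWith, magicize, MAtom.containsMagic, MAtom.preds] at hc
  | _ => exact hN.elim

theorem magicize_basic_of_atomIdb (P : Program) (B : List String) (N : MAtom)
    (hN : N.isBasic) (hb : ∀ p ∈ N.preds, ∃ n, p = PredSym.base n)
    (hi : atomIdb P (N.adornWith B)) :
    MagicOnly (magicize P (N.adornWith B)) := by
  apply magicize_basic_of_containsMagic P B N hN hb
  obtain ⟨n, γ, hmem, hidb⟩ := hi
  cases N with
  | rel p ts =>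
    obtain ⟨k, rfl⟩ := hb p (by simp [MAtom.preds])
    simp only [MAtom.adornWith, adornPredOf, MAtom.preds, List.mem_singleton,
      PredSym.adorned.injEq] at hmem
    obtain ⟨rfl, rfl⟩ := hmem
    simp [MAtom.adornWith, adornPredOf, magicize, hidb, MAtom.containsMagic, MAtom.preds]
  | top => simp [MAtom.adornWith, MAtom.preds] at hmem
  | bot => simp [MAtom.adornWith, MAtom.preds] at hmem
  | _ => exact hN.elim

theorem magicHeadAtoms_spec (P : Program) (B : List String) (N : MAtom)
    (hN : N.nonNested) (hb : ∀ p ∈ N.preds, ∃ n, p = PredSym.base n)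
    (hi : atomIdb P (N.adornWith B)) (A : MAtom)
    (hA : A ∈ magicHeadAtoms P (N.adornWith B)) : MagicOnly A := by
  cases N with
  | top =>
    obtain ⟨n, γ, hmem, -⟩ := hi
    simp [MAtom.adornWith, MAtom.preds] at hmem
  | bot =>
    obtain ⟨n, γ, hmem, -⟩ := hi
    simp [MAtom.adornWith, MAtom.preds] at hmem
  | rel p ts =>
    have h := magicize_basic_of_atomIdb P B (.rel p ts) trivial hb hi
    obtain ⟨n, rfl⟩ := hb p (by simp [MAtom.preds])
    by_cases hn : isIdbName P n
    · simp only [magicHeadAtoms, MAtom.adornWith, adornPredOf, magicize, hn, if_true,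
        Set.mem_singleton_iff] at hA h
      rwa [hA]
    · simp only [magicHeadAtoms, MAtom.adornWith, adornPredOf, magicize, hn, if_false,
        Set.mem_singleton_iff] at hA h
      rwa [hA]
  | boxPlus ρ M => rw [Set.mem_singleton_iff.mp hA]; exact magicize_basic_of_atomIdb P B M hN hb hi
  | boxMinus ρ M => rw [Set.mem_singleton_iff.mp hA]; exact magicize_basic_of_atomIdb P B M hN hb hi
  | diaPlus ρ M => rw [Set.mem_singleton_iff.mp hA]; exact magicize_basic_of_atomIdb P B M hN hb hi
  | diaMinus ρ M => rw [Set.mem_singleton_iff.mp hA]; exact magicize_basic_of_atomIdb P B M hN hb hi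
  | until_ ρ M₂ M₁ =>
    rcases hA with ⟨hc, rfl⟩ | ⟨hc, rfl⟩
    · exact magicize_basic_of_containsMagic P B M₂ hN.1
        (fun p hp => hb p (List.mem_append_left _ hp)) hc
    · exact magicize_basic_of_containsMagic P B M₁ hN.2
        (fun p hp => hb p (List.mem_append_right _ hp)) hc
  | since_ ρ M₂ M₁ =>
    rcases hA with ⟨hc, rfl⟩ | ⟨hc, rfl⟩
    · exact magicize_basic_of_containsMagic P B M₂ hN.1
        (fun p hp => hb p (List.mem_append_left _ hp)) hc
    · exact magicize_basic_of_containsMagic P B M₁ hN.2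
        (fun p hp => hb p (List.mem_append_right _ hp)) hc

/-! ### Deleting adornments -/

theorem unadorn_adornWith (B : List String) (M : MAtom)
    (hb : ∀ p ∈ M.preds, ∃ n, p = PredSym.base n) : (M.adornWith B).unadorn = M := by
  induction M with
  | top => rfl
  | bot => rfl
  | rel p ts =>
    obtain ⟨n, rfl⟩ := hb p (by simp [MAtom.preds])
    rfl
  | boxPlus ρ M ih => simp only [MAtom.adornWith, MAtom.unadorn, ih hb]
  | boxMinus ρ M ih => simp only [MAtom.adornWith, MAtom.unadorn, ih hb]
  | diaPlus ρ M ih => simp only [MAtom.adornWith, MAtom.unadorn, ih hb]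
  | diaMinus ρ M ih => simp only [MAtom.adornWith, MAtom.unadorn, ih hb]
  | until_ ρ M₂ M₁ ih2 ih1 =>
    simp only [MAtom.adornWith, MAtom.unadorn,
      ih2 (fun p hp => hb p (List.mem_append_left _ hp)),
      ih1 (fun p hp => hb p (List.mem_append_right _ hp))]
  | since_ ρ M₂ M₁ ih2 ih1 =>
    simp only [MAtom.adornWith, MAtom.unadorn,
      ih2 (fun p hp => hb p (List.mem_append_left _ hp)),
      ih1 (fun p hp => hb p (List.mem_append_right _ hp))]

theorem unadorn_adornHead (γ : Adornment) (M : MAtom) (hnf : M.headNF)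
    (hb : ∀ p ∈ M.preds, ∃ n, p = PredSym.base n) : (adornHead γ M).unadorn = M := by
  match M, hnf with
  | .boxPlus ρ (.rel p ts), _ =>
    obtain ⟨n, rfl⟩ := hb p (by simp [MAtom.preds])
    rfl
  | .boxMinus ρ (.rel p ts), _ =>
    obtain ⟨n, rfl⟩ := hb p (by simp [MAtom.preds])
    rfl

theorem mem_unadorn_adornRule_body (r : Rule) (γ : Adornment) (N : MAtom) (hN : N ∈ r.body)
    (hb : ∀ p ∈ N.preds, ∃ n, p = PredSym.base n) :
    ∃ M ∈ (adornRule r γ).body, M.unadorn = N := by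
  obtain ⟨i, hi, rfl⟩ := List.getElem_of_mem hN
  exact ⟨_, List.mem_mapIdx.mpr ⟨i, hi, rfl⟩, unadorn_adornWith _ _ hb⟩

/-- The magic guard added to a rule of the first type is not an idb atom, so it gives rise to no
rule of the second type. -/
theorem not_atomIdb_magicBodyAtom (P : Program) (H m : MAtom) (h : magicBodyAtom H = some m) :
    ¬ atomIdb P m := by
  rintro ⟨n, γ, hmem, -⟩
  unfold magicBodyAtom at h
  split at h
  · injection h with h; subst h; simp [MAtom.preds] at hmem
  · injection h with h; subst h; simp [MAtom.preds] at hmem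
  · cases h

/-! ### Comparison of the iterates -/

theorem iterates_baseLE (P : Program) (D : Dataset) (Q : String) (s : List Term) (ρq : Ivl)
    (hP : ProgramWF P) (hnf : NormalForm P) (i : ℕ) :
    BaseLE (iterates (magicProgram P Q s) (magicDataset D Q s ρq) i) (iterates P D i) := by
  induction i with
  | zero =>
    rintro t n cs ⟨g, hg | hg, h1, h2, h3⟩
    · exact ⟨g, hg, h1, h2, h3⟩
    · rw [Set.mem_singleton_iff.mp hg] at h1
      cases h1
  | succ k ih =>
    intro t n cs ha
    -- `K` contains every non-base atom, and exactly the base atoms of the next iterate of `(P, D)`.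
    let K : Interp := fun u => {a | ∀ n, a.1 = PredSym.base n → a ∈ iterates P D (k + 1) u}
    refine TP_sub _ _ K ?_ ?_ t ha n rfl
    · rintro u ⟨p, cs⟩ hp n (rfl : p = _)
      exact sub_TP _ _ _ (ih _ _ _ hp)
    · rintro _ ⟨r', hr' | hr', rfl⟩ σ u hbody
      · obtain ⟨_, ⟨r, hr, R, γ, -, -, rfl⟩, m, -, rfl⟩ := hr'
        have hbase := (hP.2 r hr).2
        have hhead : ∀ p ∈ r.head.preds, ∃ n, p = PredSym.base n :=
          fun p hp => hbase p (List.mem_append_left _ hp)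
        have hT : satAt (iterates P D (k + 1)) u (r.head.subst σ) := by
          refine TP_head P _ r hr (hP.2 r hr).1.2.1 σ u fun N hN => ?_
          have hNb : ∀ p ∈ N.preds, ∃ n, p = PredSym.base n := fun p hp =>
            hbase p (List.mem_append_right _ (List.mem_flatMap.mpr ⟨N, hN, hp⟩))
          refine satAt_mono ih σ N hNb u ?_
          obtain ⟨M, hM, hMN⟩ := mem_unadorn_adornRule_body r γ N hN hNb
          have := hbody M.unadorn (List.mem_map_of_mem (List.mem_cons_of_mem _ hM))
          rwa [hMN] at this
        change satAt K u ((adornHead γ r.head).unadorn.subst σ)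
        rw [unadorn_adornHead γ r.head (hnf r hr).1 hhead]
        have hK : BaseLE (iterates P D (k + 1)) K := fun v n cs h _ _ => h
        exact satAt_mono hK σ r.head hhead u hT
      · obtain ⟨_, ⟨_, ⟨r, hr, R, γ, -, -, rfl⟩, m, hm, rfl⟩, j, M, hjM, hidb, A, hA, rfl⟩ := hr'
        have hmem : M ∈ m :: (adornRule r γ).body := List.mem_of_getElem? hjM
        rcases List.mem_cons.mp hmem with rfl | hmem
        · exact absurd hidb (not_atomIdb_magicBodyAtom P _ _ hm)
        · obtain ⟨l, hl, rfl⟩ := List.mem_mapIdx.mp hmem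
          have hN : r.body[l] ∈ r.body := List.getElem_mem hl
          have hK : ∀ v n γ cs, (PredSym.magic n γ, cs) ∈ K v := fun v n γ cs n' h => by cases h
          refine MagicOnly.satAt hK σ A
            (magicHeadAtoms_spec P _ _ ((hnf r hr).2 _ hN) (fun p hp => ?_) hidb A hA) u
          exact (hP.2 r hr).2 p (List.mem_append_right _ (List.mem_flatMap.mpr ⟨_, hN, hp⟩))

theorem iterates_sub_model (P : Program) (D : Dataset) (hP : ProgramWF P) (J : Interp)
    (hJP : modelsProg J P) (hJD : modelsData J D) (i : ℕ) (t : ℚ) :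
    iterates P D i t ⊆ J t := by
  induction i generalizing t with
  | zero =>
    rintro ⟨p, cs⟩ ⟨g, hg, rfl, rfl, ht⟩
    exact hJD g hg t ht
  | succ k ih =>
    refine TP_sub _ _ J ih (fun r hr σ u hbody => hJP r hr σ u fun M hM => ?_) t
    have hle : BaseLE (iterates P D k) J := fun v n cs h => ih v h
    exact satAt_mono hle σ M (fun p hp => (hP.2 r hr).2 p
      (List.mem_append_right _ (List.mem_flatMap.mpr ⟨M, hM, hp⟩))) u (hbody M hM)

/-- soundness direction. If a punctual fact `S(c)@t` with `S`
idb in `P` has birth round `i ≥ 1` regarding the rewritten pair, then the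
`i`-th iterate of `(P,D)` satisfies it; consequently such facts with a birth
round regarding the rewritten pair are entailed by `(P,D)`. -/
theorem magic_rewriting_sound
    (P : Program) (D : Dataset) (Q : String) (s : List Term) (ρq : Ivl)
    (hP : ProgramWF P) (hnf : NormalForm P) (hD : DatasetWF D)
    (S : String) (c : List String) (t : ℚ) (hidb : isIdbName P S) :
    (∀ i : ℕ, 1 ≤ i →
      birthEq ⟨PredSym.base S, c, Ivl.punctual t⟩
        (magicProgram P Q s) (magicDataset D Q s ρq) i →
      satFact (iterates P D i) ⟨PredSym.base S, c, Ivl.punctual t⟩) ∧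
    (hasBirth ⟨PredSym.base S, c, Ivl.punctual t⟩
        (magicProgram P Q s) (magicDataset D Q s ρq) →
      entails P D ⟨PredSym.base S, c, Ivl.punctual t⟩) := by
  have key : ∀ i : ℕ, satFact (iterates (magicProgram P Q s) (magicDataset D Q s ρq) i)
      ⟨PredSym.base S, c, Ivl.punctual t⟩ →
      satFact (iterates P D i) ⟨PredSym.base S, c, Ivl.punctual t⟩ :=
    fun i h u hu => iterates_baseLE P D Q s ρq hP hnf i u S c (h u hu)
  refine ⟨fun i _ hi => key i hi.1, ?_⟩
  rintro ⟨i, hi⟩ J hJP hJD u hu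
  exact iterates_sub_model P D hP J hJP hJD i u (key i hi.1 u hu)
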